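/- arXiv:1906.06741 — 3 statements merged into one kernel-verified Lean document; each statement's English description precedes it below -/
import Mathlib

section
/- Theorem 2.1: The second order linear discrete-time system x_{t+2} = A₀x_t + A₁x_{t+1} + Bu_t with measurements y_t = Cx_t is observable — i.e., for every input sequence u : ℕ → ℝʳ, any two solutions x, x̃ of the recurrence with this same input for which Cx_t = Cx̃_t for all t = 0, 1, …, 2n−1 satisfy x₀ = x̃₀ and x₁ = x̃₁ — if and only if the observability matrix 𝒪(A₀,A₁,C) has rank 2n. -/
/-- The pair `(S_k, P_k)` of matrix sequences: `S₀ = A₀`, `P₀ = A₁`,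
`S_k = P_{k−1}A₀`, `P_k = S_{k−1} + P_{k−1}A₁` for `k ≥ 1`. -/
noncomputable def SPseq {n : ℕ} (A0 A1 : Matrix (Fin n) (Fin n) ℝ) :
    ℕ → Matrix (Fin n) (Fin n) ℝ × Matrix (Fin n) (Fin n) ℝ
  | 0 => (A0, A1)
  | k + 1 => ((SPseq A0 A1 k).2 * A0, (SPseq A0 A1 k).1 + (SPseq A0 A1 k).2 * A1)

/-- Left `p × n` block of the `i`-th block row of the observability matrix:
`C`, `0`, `C·S₀`, `C·S₁`, …. -/
noncomputable def obsBlockL {n p : ℕ} (A0 A1 : Matrix (Fin n) (Fin n) ℝ)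
    (C : Matrix (Fin p) (Fin n) ℝ) : ℕ → Matrix (Fin p) (Fin n) ℝ
  | 0 => C
  | 1 => 0
  | k + 2 => C * (SPseq A0 A1 k).1

/-- Right `p × n` block of the `i`-th block row of the observability matrix:
`0`, `C`, `C·P₀`, `C·P₁`, …. -/
noncomputable def obsBlockR {n p : ℕ} (A0 A1 : Matrix (Fin n) (Fin n) ℝ)
    (C : Matrix (Fin p) (Fin n) ℝ) : ℕ → Matrix (Fin p) (Fin n) ℝ
  | 0 => 0
  | 1 => C
  | k + 2 => C * (SPseq A0 A1 k).2

/-- The `(2np) × (2n)` observability matrix `𝒪(A₀, A₁, C)` whose `2n` block rows are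
`[C, 0]`, `[0, C]`, `[C·S₀, C·P₀]`, …, `[C·S_{2n−3}, C·P_{2n−3}]`. -/
noncomputable def obsMat {n p : ℕ} (A0 A1 : Matrix (Fin n) (Fin n) ℝ)
    (C : Matrix (Fin p) (Fin n) ℝ) : Matrix (Fin (2 * n) × Fin p) (Fin n ⊕ Fin n) ℝ :=
  fun iq => Sum.elim (fun j => obsBlockL A0 A1 C (iq.1 : ℕ) iq.2 j)
    (fun j => obsBlockR A0 A1 C (iq.1 : ℕ) iq.2 j)

/-- A solution of the homogeneous recurrence is determined by its first two values through
the matrices `S_k` and `P_k`. -/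
theorem solution_eq_SPseq {n : ℕ} (A0 A1 : Matrix (Fin n) (Fin n) ℝ) (k : ℕ)
    (z : ℕ → Fin n → ℝ)
    (hz : ∀ t, z (t + 2) = A0.mulVec (z t) + A1.mulVec (z (t + 1))) :
    z (k + 2) = (SPseq A0 A1 k).1.mulVec (z 0) + (SPseq A0 A1 k).2.mulVec (z 1) := by
  induction k generalizing z with
  | zero => exact hz 0
  | succ k ih =>
    have h := ih (fun t => z (t + 1)) (fun t => hz (t + 1))
    have h2 : z (1 + 1) = A0.mulVec (z 0) + A1.mulVec (z 1) := hz 0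
    simp only [zero_add] at h
    rw [h2, Matrix.mulVec_add, Matrix.mulVec_mulVec, Matrix.mulVec_mulVec] at h
    rw [show k + 1 + 2 = k + 2 + 1 from rfl, h]
    simp only [SPseq, Matrix.add_mulVec]
    abel

/-- The outputs of the homogeneous system in terms of the blocks of the observability matrix. -/
theorem output_eq_obsBlock {n p : ℕ} (A0 A1 : Matrix (Fin n) (Fin n) ℝ)
    (C : Matrix (Fin p) (Fin n) ℝ) (z : ℕ → Fin n → ℝ)
    (hz : ∀ t, z (t + 2) = A0.mulVec (z t) + A1.mulVec (z (t + 1))) (t : ℕ) :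
    C.mulVec (z t) =
      (obsBlockL A0 A1 C t).mulVec (z 0) + (obsBlockR A0 A1 C t).mulVec (z 1) := by
  match t with
  | 0 => simp [obsBlockL, obsBlockR]
  | 1 => simp [obsBlockL, obsBlockR]
  | k + 2 =>
    rw [solution_eq_SPseq A0 A1 k z hz, Matrix.mulVec_add, Matrix.mulVec_mulVec,
      Matrix.mulVec_mulVec]
    rfl

/-- The observability matrix applied to the initial values of a solution of the homogeneous
recurrence lists the outputs. -/
theorem obsMat_mulVec_apply {n p : ℕ} (A0 A1 : Matrix (Fin n) (Fin n) ℝ)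
    (C : Matrix (Fin p) (Fin n) ℝ) (z : ℕ → Fin n → ℝ)
    (hz : ∀ t, z (t + 2) = A0.mulVec (z t) + A1.mulVec (z (t + 1)))
    (i : Fin (2 * n)) (q : Fin p) :
    (obsMat A0 A1 C).mulVec (Sum.elim (z 0) (z 1)) (i, q) = C.mulVec (z i) q := by
  rw [output_eq_obsBlock A0 A1 C z hz i]
  simp [Matrix.mulVec, dotProduct, obsMat]

/-- The solution of the homogeneous recurrence with initial values `a`, `b`, paired with its
shift. -/
noncomputable def freeSolution {n : ℕ} (A0 A1 : Matrix (Fin n) (Fin n) ℝ) (a b : Fin n → ℝ) :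
    ℕ → (Fin n → ℝ) × (Fin n → ℝ)
  | 0 => (a, b)
  | t + 1 => ((freeSolution A0 A1 a b t).2,
      A0.mulVec (freeSolution A0 A1 a b t).1 + A1.mulVec (freeSolution A0 A1 a b t).2)

/-- A matrix has full column rank iff its kernel is trivial. -/
theorem rank_eq_card_iff_mulVec_eq_zero {m k K : Type*} [Fintype m] [Fintype k] [Field K]
    (M : Matrix m k K) : M.rank = Fintype.card k ↔ ∀ v, M.mulVec v = 0 → v = 0 := by
  have h := LinearMap.finrank_range_add_finrank_ker M.mulVecLin
  rw [Module.finrank_pi] at h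
  have hker : (∀ v, M.mulVec v = 0 → v = 0) ↔ M.mulVecLin.ker = ⊥ :=
    (LinearMap.ker_eq_bot' (f := M.mulVecLin)).symm
  rw [hker, ← Submodule.finrank_eq_zero, Matrix.rank]
  omega

theorem stmt1 {n r p : ℕ} (hn : 2 ≤ n) (hr : 1 ≤ r) (hp : 1 ≤ p)
    (A0 A1 : Matrix (Fin n) (Fin n) ℝ) (B : Matrix (Fin n) (Fin r) ℝ)
    (C : Matrix (Fin p) (Fin n) ℝ) :
    (∀ u : ℕ → Fin r → ℝ, ∀ x x' : ℕ → Fin n → ℝ,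
      (∀ t, x (t + 2) = A0.mulVec (x t) + A1.mulVec (x (t + 1)) + B.mulVec (u t)) →
      (∀ t, x' (t + 2) = A0.mulVec (x' t) + A1.mulVec (x' (t + 1)) + B.mulVec (u t)) →
      (∀ t, t < 2 * n → C.mulVec (x t) = C.mulVec (x' t)) →
      x 0 = x' 0 ∧ x 1 = x' 1) ↔
    (obsMat A0 A1 C).rank = 2 * n := by
  have hrank := rank_eq_card_iff_mulVec_eq_zero (obsMat A0 A1 C)
  rw [Fintype.card_sum, Fintype.card_fin, ← two_mul] at hrank
  rw [hrank]
  constructor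
  · intro h v hv
    let z : ℕ → Fin n → ℝ :=
      fun t => (freeSolution A0 A1 (v ∘ Sum.inl) (v ∘ Sum.inr) t).1
    have hz : ∀ t, z (t + 2) = A0.mulVec (z t) + A1.mulVec (z (t + 1)) := fun t => rfl
    have hv' : Sum.elim (z 0) (z 1) = v := Sum.elim_comp_inl_inr v
    obtain ⟨h0, h1⟩ := h 0 z 0 (fun t => by simp [hz]) (fun t => by simp) (fun t ht => by
      funext q
      rw [← obsMat_mulVec_apply A0 A1 C z hz ⟨t, ht⟩ q, hv', hv]
      simp)
    rw [← hv', h0, h1]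
    funext j
    cases j <;> rfl
  · intro h u x x' hx hx' hy
    have hz : ∀ t, (x - x') (t + 2) =
        A0.mulVec ((x - x') t) + A1.mulVec ((x - x') (t + 1)) := fun t => by
      simp only [Pi.sub_apply, hx, hx', Matrix.mulVec_sub]
      abel
    have hv := h (Sum.elim ((x - x') 0) ((x - x') 1)) (by
      funext ⟨i, q⟩
      rw [obsMat_mulVec_apply A0 A1 C _ hz, Pi.sub_apply, Matrix.mulVec_sub, hy i i.2,
        sub_self]
      rfl)
    exact ⟨sub_eq_zero.1 (funext fun j => congrFun hv (Sum.inl j)),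
      sub_eq_zero.1 (funext fun j => congrFun hv (Sum.inr j))⟩
end

section
/- Let x : ℝ → ℝⁿ and u : ℝ → ℝʳ be infinitely differentiable functions satisfying x''(t) = A₀x(t) + A₁x'(t) + Bu(t) for all t. Then for every k ≥ 0 and every t, the (k+2)-nd derivative of x satisfies x^{(k+2)}(t) = S_k x(t) + P_k x'(t) + Σ_{j=0}^{k} M_{k−j} u^{(j)}(t). -/
/-- The matrix sequence `M₀ = B`, `M₁ = A₁B`, `M_k = A₀M_{k−2} + A₁M_{k−1}` for `k ≥ 2`. -/
noncomputable def Mseq {n r : ℕ} (A0 A1 : Matrix (Fin n) (Fin n) ℝ)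
    (B : Matrix (Fin n) (Fin r) ℝ) : ℕ → Matrix (Fin n) (Fin r) ℝ
  | 0 => B
  | 1 => A1 * B
  | k + 2 => A0 * Mseq A0 A1 B k + A1 * Mseq A0 A1 B (k + 1)

/-- The sequences `S` and `P` also satisfy the recursion of `M`, with the coefficients on the left. -/
theorem SPseq_add_two {n : ℕ} (A0 A1 : Matrix (Fin n) (Fin n) ℝ) (k : ℕ) :
    (SPseq A0 A1 (k + 2)).1 = A0 * (SPseq A0 A1 k).1 + A1 * (SPseq A0 A1 (k + 1)).1 ∧
      (SPseq A0 A1 (k + 2)).2 = A0 * (SPseq A0 A1 k).2 + A1 * (SPseq A0 A1 (k + 1)).2 := by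
  induction k with
  | zero => constructor <;> simp only [SPseq] <;> noncomm_ring
  | succ k ih =>
    obtain ⟨hS, hP⟩ := ih
    constructor
    · change (SPseq A0 A1 (k + 2)).2 * A0 =
        A0 * ((SPseq A0 A1 k).2 * A0) + A1 * ((SPseq A0 A1 (k + 1)).2 * A0)
      rw [hP]
      noncomm_ring
    · change (SPseq A0 A1 (k + 2)).1 + (SPseq A0 A1 (k + 2)).2 * A1 =
        A0 * ((SPseq A0 A1 k).1 + (SPseq A0 A1 k).2 * A1) +
          A1 * ((SPseq A0 A1 (k + 1)).1 + (SPseq A0 A1 (k + 1)).2 * A1)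
      rw [hS, hP]
      noncomm_ring

theorem Mseq_succ_eq_SPseq_mul {n r : ℕ} (A0 A1 : Matrix (Fin n) (Fin n) ℝ)
    (B : Matrix (Fin n) (Fin r) ℝ) (k : ℕ) :
    Mseq A0 A1 B (k + 1) = (SPseq A0 A1 k).2 * B := by
  induction k using Nat.twoStepInduction with
  | zero => rfl
  | one => simp only [Mseq, SPseq, Matrix.add_mul, Matrix.mul_assoc]
  | more k ih₀ ih₁ =>
    rw [Mseq, ih₀, ih₁, (SPseq_add_two A0 A1 k).2, Matrix.add_mul, Matrix.mul_assoc,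
      Matrix.mul_assoc]

theorem HasDerivAt.const_mulVec {m n : ℕ} (A : Matrix (Fin m) (Fin n) ℝ) {f : ℝ → Fin n → ℝ}
    {f' : Fin n → ℝ} {t : ℝ} (hf : HasDerivAt f f' t) :
    HasDerivAt (fun s => A.mulVec (f s)) (A.mulVec f') t :=
  (Matrix.mulVecLin A).toContinuousLinearMap.hasFDerivAt.comp_hasDerivAt t hf

theorem ContDiff.hasDerivAt_iteratedDeriv {E : Type*} [NormedAddCommGroup E] [NormedSpace ℝ E]
    {f : ℝ → E} (hf : ContDiff ℝ (⊤ : ℕ∞) f) (k : ℕ) (t : ℝ) :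
    HasDerivAt (iteratedDeriv k f) (iteratedDeriv (k + 1) f t) t := by
  rw [iteratedDeriv_succ]
  exact (hf.differentiable_iteratedDeriv k
    (by exact_mod_cast WithTop.coe_lt_top k) t).hasDerivAt

theorem stmt8 {n r : ℕ} (hn : 1 ≤ n) (hr : 1 ≤ r)
    (A0 A1 : Matrix (Fin n) (Fin n) ℝ) (B : Matrix (Fin n) (Fin r) ℝ)
    (x : ℝ → Fin n → ℝ) (u : ℝ → Fin r → ℝ)
    (hx : ContDiff ℝ (⊤ : ℕ∞) x) (hu : ContDiff ℝ (⊤ : ℕ∞) u)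
    (heq : ∀ t, iteratedDeriv 2 x t
      = A0.mulVec (x t) + A1.mulVec (deriv x t) + B.mulVec (u t)) :
    ∀ k t, iteratedDeriv (k + 2) x t
      = (SPseq A0 A1 k).1.mulVec (x t) + (SPseq A0 A1 k).2.mulVec (deriv x t)
        + ∑ j ∈ Finset.range (k + 1),
            (Mseq A0 A1 B (k - j)).mulVec (iteratedDeriv j u t) := by
  intro k
  induction k with
  | zero => simpa [SPseq, Mseq] using heq
  | succ k ih =>
    intro t
    have hx₀ : HasDerivAt x (deriv x t) t := by
      simpa using hx.hasDerivAt_iteratedDeriv 0 t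
    have hx₁ : HasDerivAt (deriv x) (iteratedDeriv 2 x t) t := by
      simpa using hx.hasDerivAt_iteratedDeriv 1 t
    have hsum := HasDerivAt.fun_sum (u := Finset.range (k + 1)) fun j _ =>
      (hu.hasDerivAt_iteratedDeriv j t).const_mulVec (Mseq A0 A1 B (k - j))
    have hderiv := ((hx₀.const_mulVec (SPseq A0 A1 k).1).add
      (hx₁.const_mulVec (SPseq A0 A1 k).2)).add hsum
    have hk := hx.hasDerivAt_iteratedDeriv (k + 2) t
    rw [funext ih] at hk
    rw [show k + 1 + 2 = k + 2 + 1 by ring, hk.unique hderiv, heq t,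
      Finset.sum_range_succ' _ (k + 1)]
    simp only [SPseq, Nat.add_sub_add_right, Nat.sub_zero, Mseq_succ_eq_SPseq_mul,
      iteratedDeriv_zero, Matrix.mulVec_add, Matrix.add_mulVec, Matrix.mulVec_mulVec]
    abel
end

section
/- Theorem 4.1: The second order linear discrete-time system x_{t+2} = A₀x_t + A₁x_{t+1} + Bu_t is controllable — i.e., for every pair of initial states a₀, a₁ ∈ ℝⁿ and every target x_f ∈ ℝⁿ there exist control vectors u₀, u₁, …, u_{n−1} ∈ ℝʳ such that the solution of the recurrence with x₀ = a₀, x₁ = a₁ and these inputs satisfies x_{n+1} = x_f — if and only if the controllability matrix 𝒞(A₀,A₁,B) has rank n. -/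
/-- The `n × (nr)` controllability matrix `𝒞(A₀, A₁, B) = [M₀ M₁ ⋯ M_{n−1}]`. -/
noncomputable def ctrbMat {n r : ℕ} (A0 A1 : Matrix (Fin n) (Fin n) ℝ)
    (B : Matrix (Fin n) (Fin r) ℝ) : Matrix (Fin n) (Fin n × Fin r) ℝ :=
  fun i jk => Mseq A0 A1 B (jk.1 : ℕ) i jk.2

open Matrix

/-- The solution of `x_{t+2} = A₀x_t + A₁x_{t+1} + w_t` with `x₀ = a0`, `x₁ = a1`. -/
noncomputable def secondOrderSol {n : ℕ} (A0 A1 : Matrix (Fin n) (Fin n) ℝ)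
    (a0 a1 : Fin n → ℝ) (w : ℕ → Fin n → ℝ) : ℕ → Fin n → ℝ
  | 0 => a0
  | 1 => a1
  | t + 2 => A0 *ᵥ secondOrderSol A0 A1 a0 a1 w t +
      A1 *ᵥ secondOrderSol A0 A1 a0 a1 w (t + 1) + w t

/-- A matrix has full row rank iff the associated linear map is surjective. -/
theorem Matrix.rank_eq_iff_mulVec_surjective {n : ℕ} {m : Type*} [Fintype m]
    (C : Matrix (Fin n) m ℝ) : C.rank = n ↔ Function.Surjective C.mulVec := by
  have h : Function.Surjective C.mulVec ↔ LinearMap.range C.mulVecLin = ⊤ :=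
    (LinearMap.range_eq_top (f := C.mulVecLin)).symm
  rw [h, Matrix.rank]
  refine ⟨fun hC => Submodule.eq_top_of_finrank_eq ?_, fun hC => ?_⟩
  · simpa using hC
  · rw [hC]
    simp

/-- Convolution form of the forced response satisfies the second order recurrence. -/
theorem sum_Mseq_mulVec_add_two {n r : ℕ} (A0 A1 : Matrix (Fin n) (Fin n) ℝ)
    (B : Matrix (Fin n) (Fin r) ℝ) (u : ℕ → Fin r → ℝ) (k : ℕ) :
    ∑ i ∈ Finset.range (k + 2), Mseq A0 A1 B (k + 2 - 1 - i) *ᵥ u i =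
      A0 *ᵥ (∑ i ∈ Finset.range k, Mseq A0 A1 B (k - 1 - i) *ᵥ u i) +
      A1 *ᵥ (∑ i ∈ Finset.range (k + 1), Mseq A0 A1 B (k + 1 - 1 - i) *ᵥ u i) +
      B *ᵥ u (k + 1) := by
  have hterm : ∀ i ∈ Finset.range k, Mseq A0 A1 B (k + 2 - 1 - i) *ᵥ u i =
      A0 *ᵥ (Mseq A0 A1 B (k - 1 - i) *ᵥ u i) +
      A1 *ᵥ (Mseq A0 A1 B (k + 1 - 1 - i) *ᵥ u i) := by
    intro i hi
    obtain ⟨j, rfl⟩ := Nat.exists_eq_add_of_lt (Finset.mem_range.mp hi)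
    rw [show i + j + 1 + 2 - 1 - i = j + 2 by omega, show i + j + 1 - 1 - i = j by omega,
      show i + j + 1 + 1 - 1 - i = j + 1 by omega, Mseq, Matrix.add_mulVec,
      Matrix.mulVec_mulVec, Matrix.mulVec_mulVec]
  rw [Finset.sum_range_succ, Finset.sum_range_succ, Finset.sum_congr rfl hterm,
    Finset.sum_add_distrib, Finset.sum_range_succ _ k, Matrix.mulVec_add,
    Matrix.mulVec_sum, Matrix.mulVec_sum, show k + 2 - 1 - k = 1 by omega,
    show k + 2 - 1 - (k + 1) = 0 by omega, show k + 1 - 1 - k = 0 by omega]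
  simp only [Mseq, Matrix.mulVec_mulVec]
  abel

/-- Every solution is the free response plus the convolution of `M` with the inputs. -/
theorem solution_eq_free_add_forced {n r : ℕ} (A0 A1 : Matrix (Fin n) (Fin n) ℝ)
    (B : Matrix (Fin n) (Fin r) ℝ) (u : ℕ → Fin r → ℝ) (x : ℕ → Fin n → ℝ)
    (hx : ∀ t, x (t + 2) = A0 *ᵥ x t + A1 *ᵥ x (t + 1) + B *ᵥ u t) (k : ℕ) :
    x (k + 1) = secondOrderSol A0 A1 (x 0) (x 1) 0 (k + 1) +
      ∑ i ∈ Finset.range k, Mseq A0 A1 B (k - 1 - i) *ᵥ u i := by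
  induction k using Nat.twoStepInduction with
  | zero => simp [secondOrderSol]
  | one => simp [hx 0, secondOrderSol, Mseq]
  | more k ih₀ ih₁ =>
    rw [hx (k + 1), sum_Mseq_mulVec_add_two, ih₀, ih₁, Matrix.mulVec_add, Matrix.mulVec_add,
      secondOrderSol.eq_def _ _ _ _ _ (k + 2 + 1)]
    simp only [Pi.zero_apply]
    abel

/-- The controllability matrix applied to the inputs stacked in reverse order. -/
theorem ctrbMat_mulVec {n r : ℕ} (A0 A1 : Matrix (Fin n) (Fin n) ℝ)
    (B : Matrix (Fin n) (Fin r) ℝ) (u : ℕ → Fin r → ℝ) :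
    ctrbMat A0 A1 B *ᵥ (fun p => u (n - 1 - p.1) p.2) =
      ∑ i ∈ Finset.range n, Mseq A0 A1 B (n - 1 - i) *ᵥ u i := by
  rw [← Finset.sum_range_reflect]
  have hterm : ∀ j ∈ Finset.range n,
      Mseq A0 A1 B (n - 1 - (n - 1 - j)) *ᵥ u (n - 1 - j) =
        Mseq A0 A1 B j *ᵥ u (n - 1 - j) := by
    intro j hj
    rw [Nat.sub_sub_self (Nat.le_sub_one_of_lt (Finset.mem_range.mp hj))]
  rw [Finset.sum_congr rfl hterm,
    Finset.sum_range fun j => Mseq A0 A1 B j *ᵥ u (n - 1 - j)]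
  ext i
  simp [Matrix.mulVec, dotProduct, Fintype.sum_prod_type, ctrbMat]

theorem secondOrderSol_zero {n : ℕ} (A0 A1 : Matrix (Fin n) (Fin n) ℝ) (t : ℕ) :
    secondOrderSol A0 A1 0 0 0 t = 0 := by
  induction t using Nat.twoStepInduction with
  | zero => rfl
  | one => rfl
  | more t ih₀ ih₁ => simp [secondOrderSol, ih₀, ih₁]

theorem stmt10 {n r : ℕ} (hn : 1 ≤ n) (hr : 1 ≤ r)
    (A0 A1 : Matrix (Fin n) (Fin n) ℝ) (B : Matrix (Fin n) (Fin r) ℝ) :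
    (∀ a0 a1 xf : Fin n → ℝ, ∃ u : ℕ → Fin r → ℝ, ∃ x : ℕ → Fin n → ℝ,
      x 0 = a0 ∧ x 1 = a1 ∧
      (∀ t, x (t + 2) = A0.mulVec (x t) + A1.mulVec (x (t + 1)) + B.mulVec (u t)) ∧
      x (n + 1) = xf) ↔
    (ctrbMat A0 A1 B).rank = n := by
  rw [Matrix.rank_eq_iff_mulVec_surjective]
  constructor
  · intro h xf
    obtain ⟨u, x, h0, h1, hx, hxf⟩ := h 0 0 xf
    refine ⟨fun p => u (n - 1 - p.1) p.2, ?_⟩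
    rw [ctrbMat_mulVec, ← hxf, solution_eq_free_add_forced A0 A1 B u x hx n, h0, h1,
      secondOrderSol_zero, zero_add]
  · intro h a0 a1 xf
    obtain ⟨v, hv⟩ := h (xf - secondOrderSol A0 A1 a0 a1 0 (n + 1))
    let u : ℕ → Fin r → ℝ := fun t l => v (⟨n - 1 - t, by omega⟩, l)
    have hu : (fun p : Fin n × Fin r => u (n - 1 - p.1) p.2) = v := by
      ext ⟨j, l⟩
      have hj : n - 1 - (n - 1 - (j : ℕ)) = j := by omega
      simp [u, hj]
    let x := secondOrderSol A0 A1 a0 a1 fun t => B *ᵥ u t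
    have hx : ∀ t, x (t + 2) = A0 *ᵥ x t + A1 *ᵥ x (t + 1) + B *ᵥ u t := fun t => by
      simp only [x, secondOrderSol]
    refine ⟨u, x, rfl, rfl, hx, ?_⟩
    have hfree : secondOrderSol A0 A1 (x 0) (x 1) 0 = secondOrderSol A0 A1 a0 a1 0 := rfl
    rw [solution_eq_free_add_forced A0 A1 B u x hx n, ← ctrbMat_mulVec, hu, hv, hfree,
      add_sub_cancel]
end
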